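/- arXiv:1808.03764 — 2 statements merged into one kernel-verified Lean document; each statement's English description precedes it below -/
import Mathlib

section
/- For every n ≥ 0, the joint distribution of the quintuple of statistics (fp, exc, inv, crs, nes) over S_n(132) equals that over S_n(213): the multisets {(fp(σ), exc(σ), inv(σ), crs(σ), nes(σ)) : σ ∈ S_n(132)} and {(fp(σ), exc(σ), inv(σ), crs(σ), nes(σ)) : σ ∈ S_n(213)} are equal. -/
open Equiv Finset

/-- Number of crossings of a permutation of `Fin n` (0-indexed version of the
classical definition on `[n] = {1,…,n}`): pairs `(i,j)` with
`i<j<σ(i)<σ(j)` or `σ(i)<σ(j)≤i<j`. -/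
def crs {n : ℕ} (σ : Equiv.Perm (Fin n)) : ℕ :=
  (Finset.univ.filter (fun q : Fin n × Fin n =>
    ((q.1 : ℕ) < q.2 ∧ (q.2 : ℕ) < σ q.1 ∧ (σ q.1 : ℕ) < σ q.2) ∨
    ((σ q.1 : ℕ) < σ q.2 ∧ (σ q.2 : ℕ) ≤ q.1 ∧ (q.1 : ℕ) < q.2))).card

/-- Number of nestings of a permutation of `Fin n`: pairs `(i,j)` with
`i<j<σ(j)<σ(i)` or `σ(j)<σ(i)≤i<j`. -/
def nes {n : ℕ} (σ : Equiv.Perm (Fin n)) : ℕ :=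
  (Finset.univ.filter (fun q : Fin n × Fin n =>
    ((q.1 : ℕ) < q.2 ∧ (q.2 : ℕ) < σ q.2 ∧ (σ q.2 : ℕ) < σ q.1) ∨
    ((σ q.2 : ℕ) < σ q.1 ∧ (σ q.1 : ℕ) ≤ q.1 ∧ (q.1 : ℕ) < q.2))).card

/-- Number of fixed points. -/
def fp {n : ℕ} (σ : Equiv.Perm (Fin n)) : ℕ :=
  (Finset.univ.filter (fun i : Fin n => σ i = i)).card

/-- Number of excedances. -/
def exc {n : ℕ} (σ : Equiv.Perm (Fin n)) : ℕ :=
  (Finset.univ.filter (fun i : Fin n => (i : ℕ) < σ i)).card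

/-- Number of inversions. -/
def invStat {n : ℕ} (σ : Equiv.Perm (Fin n)) : ℕ :=
  (Finset.univ.filter (fun q : Fin n × Fin n => q.1 < q.2 ∧ σ q.2 < σ q.1)).card

/-- `σ` contains the pattern `τ`: there is a strictly increasing choice of positions
on which `σ` is order-isomorphic to `τ`. -/
def Contains {n k : ℕ} (σ : Equiv.Perm (Fin n)) (τ : Equiv.Perm (Fin k)) : Prop :=
  ∃ f : Fin k → Fin n, StrictMono f ∧ ∀ a b : Fin k, σ (f a) < σ (f b) ↔ τ a < τ b

/-- `σ` avoids the pattern `τ`. -/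
def Avoids {n k : ℕ} (σ : Equiv.Perm (Fin n)) (τ : Equiv.Perm (Fin k)) : Prop :=
  ¬ Contains σ τ

/-- The pattern 123 (as a permutation of `Fin 3`, 0-indexed). -/
def p123 : Equiv.Perm (Fin 3) := 1
/-- The pattern 132. -/
def p132 : Equiv.Perm (Fin 3) := Equiv.swap 1 2
/-- The pattern 213. -/
def p213 : Equiv.Perm (Fin 3) := Equiv.swap 0 1
/-- The pattern 321. -/
def p321 : Equiv.Perm (Fin 3) := Equiv.swap 0 2
/-- The pattern 231. -/
def p231 : Equiv.Perm (Fin 3) := Equiv.swap 0 2 * Equiv.swap 0 1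
/-- The pattern 312. -/
def p312 : Equiv.Perm (Fin 3) := Equiv.swap 0 2 * Equiv.swap 1 2

/-- The inverse of the reverse-complement of a permutation. -/
def revCompInv {n : ℕ} (σ : Equiv.Perm (Fin n)) : Equiv.Perm (Fin n) :=
  Fin.revPerm * σ⁻¹ * Fin.revPerm

theorem revCompInv_rev_apply {n : ℕ} (σ : Equiv.Perm (Fin n)) (i : Fin n) :
    revCompInv σ (σ i).rev = i.rev := by
  simp [revCompInv]

theorem revCompInv_involutive {n : ℕ} :
    Function.Involutive (revCompInv : Equiv.Perm (Fin n) → Equiv.Perm (Fin n)) := by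
  intro σ
  ext i
  simp [revCompInv, mul_assoc, Equiv.Perm.inv_def]

theorem fp_revCompInv {n : ℕ} (σ : Equiv.Perm (Fin n)) : fp (revCompInv σ) = fp σ := by
  refine (Finset.card_equiv (σ.trans Fin.revPerm) fun i => ?_).symm
  simp [revCompInv_rev_apply, eq_comm]

theorem exc_revCompInv {n : ℕ} (σ : Equiv.Perm (Fin n)) : exc (revCompInv σ) = exc σ := by
  refine (Finset.card_equiv (σ.trans Fin.revPerm) fun i => ?_).symm
  simp only [Finset.mem_filter, Finset.mem_univ, true_and, Equiv.trans_apply,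
    Fin.revPerm_apply, revCompInv_rev_apply, Fin.val_rev]
  omega

theorem invStat_revCompInv {n : ℕ} (σ : Equiv.Perm (Fin n)) :
    invStat (revCompInv σ) = invStat σ := by
  refine (Finset.card_equiv
    ((σ.trans Fin.revPerm).prodCongr (σ.trans Fin.revPerm)) fun q => ?_).symm
  simp only [Finset.mem_filter, Finset.mem_univ, true_and, Equiv.prodCongr_apply, Prod.map,
    Equiv.trans_apply, Fin.revPerm_apply, revCompInv_rev_apply, Fin.rev_lt_rev]
  exact and_comm

theorem nes_revCompInv {n : ℕ} (σ : Equiv.Perm (Fin n)) : nes (revCompInv σ) = nes σ := by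
  refine (Finset.card_equiv
    ((σ.trans Fin.revPerm).prodCongr (σ.trans Fin.revPerm)) fun q => ?_).symm
  simp only [Finset.mem_filter, Finset.mem_univ, true_and, Equiv.prodCongr_apply, Prod.map,
    Equiv.trans_apply, Fin.revPerm_apply, revCompInv_rev_apply, Fin.val_rev]
  omega

theorem crs_revCompInv {n : ℕ} (σ : Equiv.Perm (Fin n)) : crs (revCompInv σ) = crs σ := by
  refine (Finset.card_equiv ((Equiv.prodComm _ _).trans
    ((σ.trans Fin.revPerm).prodCongr (σ.trans Fin.revPerm))) fun q => ?_).symm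
  simp only [Finset.mem_filter, Finset.mem_univ, true_and, Equiv.prodCongr_apply, Prod.map,
    Equiv.trans_apply, Equiv.prodComm_apply, Prod.fst_swap, Prod.snd_swap,
    Fin.revPerm_apply, revCompInv_rev_apply, Fin.val_rev]
  omega

theorem Contains.revCompInv {n k : ℕ} {σ : Equiv.Perm (Fin n)} {τ : Equiv.Perm (Fin k)}
    (h : Contains σ τ) : Contains (revCompInv σ) (revCompInv τ) := by
  obtain ⟨f, hf, hστ⟩ := h
  refine ⟨fun a => (σ (f (τ⁻¹ a.rev))).rev, fun a b hab => ?_, fun a b => ?_⟩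
  · simpa [hστ] using hab
  · simp only [revCompInv_rev_apply, Fin.rev_lt_rev, hf.lt_iff_lt]
    simp [_root_.revCompInv]

theorem contains_revCompInv_iff {n k : ℕ} {σ : Equiv.Perm (Fin n)} {τ : Equiv.Perm (Fin k)} :
    Contains (revCompInv σ) (revCompInv τ) ↔ Contains σ τ :=
  ⟨fun h => by simpa only [revCompInv_involutive _] using h.revCompInv, Contains.revCompInv⟩

theorem revCompInv_p132 : revCompInv p132 = p213 := by
  decide

theorem avoids_p213_revCompInv_iff {n : ℕ} {σ : Equiv.Perm (Fin n)} :
    Avoids (revCompInv σ) p213 ↔ Avoids σ p132 := by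
  rw [← revCompInv_p132, Avoids, Avoids, contains_revCompInv_iff]

open scoped Classical in
/-- The joint distribution of `(fp, exc, inv, crs, nes)` over `S_n(132)` equals
that over `S_n(213)`. -/
theorem fp_exc_inv_crs_nes_joint_132_213 (n : ℕ) :
    ((Finset.univ.filter (fun σ : Equiv.Perm (Fin n) => Avoids σ p132)).val.map
        (fun σ => (fp σ, exc σ, invStat σ, crs σ, nes σ)))
      = ((Finset.univ.filter (fun σ : Equiv.Perm (Fin n) => Avoids σ p213)).val.map
        (fun σ => (fp σ, exc σ, invStat σ, crs σ, nes σ))) := by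
  refine Multiset.map_eq_map_of_bij_of_nodup _ _ (Finset.nodup _) (Finset.nodup _)
    (fun σ _ => revCompInv σ) (fun σ hσ => ?_) (fun _ _ _ _ h => revCompInv_involutive.injective h)
    (fun σ hσ => ⟨revCompInv σ, ?_, revCompInv_involutive σ⟩) (fun σ _ => ?_)
  · simpa [avoids_p213_revCompInv_iff] using hσ
  · simpa [← avoids_p213_revCompInv_iff, revCompInv_involutive σ] using hσ
  · simp only [fp_revCompInv, exc_revCompInv, invStat_revCompInv, crs_revCompInv, nes_revCompInv]
end

section
/- For every n ≥ 0, there exists a bijection Θ from S_n(321) to S_n(132) that simultaneously preserves the number of fixed points, the number of excedances and the number of crossings: fp(Θ(σ))=fp(σ), exc(Θ(σ))=exc(σ) and crs(Θ(σ))=crs(σ) for all σ ∈ S_n(321). -/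
open Equiv Finset

theorem avoids_p321_iff {n : ℕ} (σ : Perm (Fin n)) :
    Avoids σ p321 ↔ ∀ i j k : Fin n, i < j → j < k → ¬ (σ k < σ j ∧ σ j < σ i) := by
  constructor
  · rintro h i j k hij hjk ⟨h1, h2⟩
    refine h ⟨![i, j, k], ?_, ?_⟩
    · rw [Fin.strictMono_iff_lt_succ]
      intro a
      fin_cases a <;> simp [hij, hjk]
    · have h3 := h1.trans h2
      intro a b
      fin_cases a <;> fin_cases b <;> simp [p321, h1, h2, h3, h1.le, h2.le, h3.le, swap_apply_def]
  · rintro h ⟨f, hf, hp⟩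
    refine h (f 0) (f 1) (f 2) (hf (by decide)) (hf (by decide)) ⟨?_, ?_⟩
    · rw [hp]; decide
    · rw [hp]; decide

theorem avoids_p132_iff {n : ℕ} (σ : Perm (Fin n)) :
    Avoids σ p132 ↔ ∀ i j k : Fin n, i < j → j < k → ¬ (σ i < σ k ∧ σ k < σ j) := by
  constructor
  · rintro h i j k hij hjk ⟨h1, h2⟩
    refine h ⟨![i, j, k], ?_, ?_⟩
    · rw [Fin.strictMono_iff_lt_succ]
      intro a
      fin_cases a <;> simp [hij, hjk]
    · have h3 := h1.trans h2
      intro a b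
      fin_cases a <;> fin_cases b <;> simp [p132, h1, h2, h3, h1.le, h2.le, h3.le, swap_apply_def]
  · rintro h ⟨f, hf, hp⟩
    refine h (f 0) (f 1) (f 2) (hf (by decide)) (hf (by decide)) ⟨?_, ?_⟩
    · rw [hp]; decide
    · rw [hp]; decide

/-- The number of points of `σ` strictly to the left of and strictly below the point at `i`. -/
def lowerLeft {n : ℕ} (σ : Perm (Fin n)) (i : Fin n) : ℕ :=
  #{j | j < i ∧ σ j < σ i}

/-- The product over the points of `σ`, translated vertically by `s`, of a weight depending on the
signed distance to the diagonal and on the number of points to the lower left. -/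
def localWeight {R : Type*} [CommSemiring R] (w : ℤ → ℕ → R) (s : ℤ) {n : ℕ}
    (σ : Perm (Fin n)) : R :=
  ∏ i, w ((σ i : ℤ) + s - i) (lowerLeft σ i)

open Classical in
/-- The generating function of `132`-avoiding permutations with respect to `localWeight`. -/
noncomputable def sum132 {R : Type*} [CommSemiring R] (w : ℤ → ℕ → R) (n : ℕ) (s : ℤ) : R :=
  ∑ σ : Perm (Fin n) with Avoids σ p132, localWeight w s σ

/-- The function underlying `glue`. -/
def glueFun {k r : ℕ} (τ : Perm (Fin k)) (ρ : Perm (Fin r)) (i : Fin (k + 1 + r)) :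
    Fin (k + 1 + r) :=
  if h : (i : ℕ) < k then ⟨τ ⟨i, h⟩ + r, by omega⟩
  else if h' : (i : ℕ) = k then ⟨k + r, by omega⟩
  else ⟨ρ ⟨i - (k + 1), by omega⟩, by omega⟩

theorem glueFun_injective {k r : ℕ} (τ : Perm (Fin k)) (ρ : Perm (Fin r)) :
    Function.Injective (glueFun τ ρ) := by
  intro i j h
  unfold glueFun at h
  split_ifs at h with h1 h2 h3 h4 h5 h6 h7 h8 <;> simp only [Fin.mk.injEq] at h <;>
    first
    | omega
    | (have := Fin.ext (show (τ ⟨i, _⟩ : ℕ) = τ ⟨j, _⟩ by omega); simpa [Fin.ext_iff] using this)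
    | (have := Fin.ext h; simp at this; omega)

/-- The permutation `L m R` where `m` is the maximum, `L` is `τ` shifted above `R`, and `R` is `ρ`. -/
noncomputable def glue {k r : ℕ} (τ : Perm (Fin k)) (ρ : Perm (Fin r)) : Perm (Fin (k + 1 + r)) :=
  Equiv.ofBijective (glueFun τ ρ) (Finite.injective_iff_bijective.1 (glueFun_injective τ ρ))

section glue

variable {k r : ℕ} (τ : Perm (Fin k)) (ρ : Perm (Fin r))

theorem glue_left (i : Fin k) :
    (glue τ ρ (Fin.castAdd r (Fin.castAdd 1 i)) : ℕ) = τ i + r := by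
  simp [glue, glueFun]

theorem glue_middle (i : Fin 1) :
    (glue τ ρ (Fin.castAdd r (Fin.natAdd k i)) : ℕ) = k + r := by
  simp [glue, glueFun]

theorem glue_right (i : Fin r) :
    (glue τ ρ (Fin.natAdd (k + 1) i) : ℕ) = ρ i := by
  have h : ¬ (k + 1 + (i : ℕ) < k) := by omega
  have h' : ¬ (k + 1 + (i : ℕ) = k) := by omega
  simp [glue, glueFun, h, h']

theorem lowerLeft_glue_left (i : Fin k) :
    lowerLeft (glue τ ρ) (Fin.castAdd r (Fin.castAdd 1 i)) = lowerLeft τ i := by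
  have h : ¬ (k < (i : ℕ)) := by omega
  have h' : ∀ j : Fin r, ¬ (k + 1 + (j : ℕ) < i) := fun j => by omega
  simp only [lowerLeft, card_filter, Fin.sum_univ_add, Fin.lt_def, glue_left, glue_middle,
    glue_right]
  simp [h, h']

theorem lowerLeft_glue_middle (i : Fin 1) :
    lowerLeft (glue τ ρ) (Fin.castAdd r (Fin.natAdd k i)) = k := by
  simp only [lowerLeft, card_filter, Fin.sum_univ_add, Fin.lt_def, glue_left, glue_middle,
    glue_right]
  simp
  intros
  omega

theorem lowerLeft_glue_right (i : Fin r) :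
    lowerLeft (glue τ ρ) (Fin.natAdd (k + 1) i) = lowerLeft ρ i := by
  simp only [lowerLeft, card_filter, Fin.sum_univ_add, Fin.lt_def, glue_left, glue_middle,
    glue_right]
  simp
  constructor
  · intros
    omega
  · intros
    omega

theorem localWeight_glue {R : Type*} [CommSemiring R] (w : ℤ → ℕ → R) (s : ℤ) :
    localWeight w s (glue τ ρ) =
      localWeight w (s + r) τ * w (s + r) k * localWeight w (s - k - 1) ρ := by
  simp only [localWeight, Fin.prod_univ_add, lowerLeft_glue_left, lowerLeft_glue_middle,
    lowerLeft_glue_right, glue_left, glue_middle, glue_right, Fin.prod_univ_one]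
  congr 1
  · congr 1
    · refine prod_congr rfl fun i _ => ?_
      congr 1
      simp
      ring
    · congr 1
      simp
      ring
  · refine prod_congr rfl fun i _ => ?_
    congr 1
    simp
    ring

theorem glue_injective {τ τ' : Perm (Fin k)} {ρ ρ' : Perm (Fin r)} (h : glue τ ρ = glue τ' ρ') :
    τ = τ' ∧ ρ = ρ' := by
  constructor
  · ext i
    have := glue_left τ ρ i
    rw [h, glue_left] at this
    omega
  · ext i
    have := glue_right τ ρ i
    rw [h, glue_right] at this
    omega

theorem forall_fin_glue {p : Fin (k + 1 + r) → Prop} :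
    (∀ i, p i) ↔ (∀ i, p (Fin.castAdd r (Fin.castAdd 1 i))) ∧
      p (Fin.castAdd r (Fin.natAdd k 0)) ∧ ∀ i, p (Fin.natAdd (k + 1) i) := by
  constructor
  · exact fun h => ⟨fun i => h _, h _, fun i => h _⟩
  · rintro ⟨h1, h2, h3⟩ i
    refine Fin.addCases (fun j => Fin.addCases h1 (fun l => ?_) j) h3 i
    rwa [Subsingleton.elim l 0]

theorem avoids_glue_iff : Avoids (glue τ ρ) p132 ↔ Avoids τ p132 ∧ Avoids ρ p132 := by
  simp only [avoids_p132_iff, forall_fin_glue, Fin.lt_def, glue_left, glue_middle, glue_right,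
    Fin.val_castAdd, Fin.val_natAdd]
  constructor
  · rintro ⟨h1, h2, h3⟩
    refine ⟨fun i j l hij hjl hh => ?_, fun i j l hij hjl hh => ?_⟩
    · exact ((h1 i).1 j).1 l hij hjl (by omega)
    · exact ((h3 i).2.2 j).2.2 l (by omega) (by omega) (by omega)
  · rintro ⟨h1, h2⟩
    refine ⟨fun i => ⟨fun j => ⟨fun l a b c => h1 i j l a b (by omega), ?_⟩, ?_⟩, ?_⟩
    · refine ⟨?_, fun l => ?_⟩ <;> intros <;> omega
    · refine ⟨⟨fun l => ?_, ?_, fun l => ?_⟩, fun j => ⟨fun l => ?_, ?_, fun l => ?_⟩⟩ <;> intros <;> omega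
    · refine ⟨⟨fun j => ⟨fun l => ?_, ?_, fun l => ?_⟩, ⟨fun l => ?_, ?_, fun l => ?_⟩,
        fun j => ⟨fun l => ?_, ?_, fun l => ?_⟩⟩, fun i => ⟨fun j => ⟨fun l => ?_, ?_, fun l => ?_⟩,
          ⟨fun l => ?_, ?_, fun l => ?_⟩, fun j => ⟨fun l => ?_, ?_, fun l => ?_⟩⟩⟩
      all_goals intro a b c
      all_goals first | omega | exact h2 i j l (by omega) (by omega) (by omega)

end glue

theorem exists_glue_eq {k r : ℕ} {σ : Perm (Fin (k + 1 + r))} (hσ : Avoids σ p132)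
    (hmax : (σ (Fin.castAdd r (Fin.natAdd k 0)) : ℕ) = k + r) : ∃ τ ρ, glue τ ρ = σ := by
  rw [avoids_p132_iff] at hσ
  have hne : ∀ a b : Fin (k + 1 + r), (a : ℕ) ≠ b → (σ a : ℕ) ≠ σ b := fun a b hab h =>
    hab (congrArg _ (σ.injective (Fin.ext h)))
  have key : ∀ (i : Fin k) (j : Fin r),
      (σ (Fin.natAdd (k + 1) j) : ℕ) < σ (Fin.castAdd r (Fin.castAdd 1 i)) := by
    intro i j
    have h := hσ (Fin.castAdd r (Fin.castAdd 1 i)) (Fin.castAdd r (Fin.natAdd k 0))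
      (Fin.natAdd (k + 1) j)
      (by simp only [Fin.lt_def, Fin.val_castAdd, Fin.val_natAdd]; omega)
      (by simp only [Fin.lt_def, Fin.val_castAdd, Fin.val_natAdd]; omega)
    simp only [Fin.lt_def, hmax] at h
    have h1 := hne (Fin.natAdd (k + 1) j) (Fin.castAdd r (Fin.natAdd k 0))
      (by simp only [Fin.val_castAdd, Fin.val_natAdd]; omega)
    have h2 := hne (Fin.natAdd (k + 1) j) (Fin.castAdd r (Fin.castAdd 1 i))
      (by simp only [Fin.val_castAdd, Fin.val_natAdd]; omega)
    omega
  have hleft : ∀ i : Fin k, r ≤ (σ (Fin.castAdd r (Fin.castAdd 1 i)) : ℕ) := by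
    intro i
    have h := card_le_card_of_injOn (s := (univ : Finset (Fin r)))
      (t := Iio (σ (Fin.castAdd r (Fin.castAdd 1 i)))) (fun j => σ (Fin.natAdd (k + 1) j))
      (fun j _ => by simpa only [coe_Iio, Set.mem_Iio, Fin.lt_def] using key i j)
      (fun a _ b _ hab => by simpa using hab)
    simpa using h
  have hright : ∀ j : Fin r, (σ (Fin.natAdd (k + 1) j) : ℕ) < r := by
    intro j
    have h := card_le_card_of_injOn (s := (univ : Finset (Fin (k + 1))))
      (t := Ioi (σ (Fin.natAdd (k + 1) j))) (fun i => σ (Fin.castAdd r i))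
      (fun i _ => by
        refine Fin.addCases (fun i => ?_) (fun i => ?_) i
        · simpa only [coe_Ioi, Set.mem_Ioi, Fin.lt_def] using key i j
        · have h1 := hne (Fin.natAdd (k + 1) j) (Fin.castAdd r (Fin.natAdd k 0))
            (by simp only [Fin.val_castAdd, Fin.val_natAdd]; omega)
          rw [Subsingleton.elim i 0]
          simp only [coe_Ioi, Set.mem_Ioi, Fin.lt_def]
          omega)
      (fun a _ b _ hab => by simpa using hab)
    simp at h
    omega
  have hτ : Function.Injective fun i : Fin k =>
      (⟨(σ (Fin.castAdd r (Fin.castAdd 1 i)) : ℕ) - r, by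
        have h1 := hne (Fin.castAdd r (Fin.castAdd 1 i)) (Fin.castAdd r (Fin.natAdd k 0))
          (by simp only [Fin.val_castAdd, Fin.val_natAdd]; omega)
        have := i.2
        omega⟩ : Fin k) := by
    intro a b hab
    have := hleft a
    have := hleft b
    simp only [Fin.mk.injEq] at hab
    have h : σ (Fin.castAdd r (Fin.castAdd 1 a)) = σ (Fin.castAdd r (Fin.castAdd 1 b)) :=
      Fin.ext (by omega)
    simpa using h
  have hρ : Function.Injective fun j : Fin r =>
      (⟨σ (Fin.natAdd (k + 1) j), hright j⟩ : Fin r) := by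
    intro a b hab
    simpa [← Fin.ext_iff] using hab
  refine ⟨Equiv.ofBijective _ (Finite.injective_iff_bijective.1 hτ),
    Equiv.ofBijective _ (Finite.injective_iff_bijective.1 hρ), Equiv.ext ?_⟩
  rw [forall_fin_glue]
  refine ⟨fun i => Fin.ext ?_, Fin.ext ?_, fun j => Fin.ext ?_⟩
  · have := hleft i
    rw [glue_left]
    simp only [ofBijective_apply]
    omega
  · rw [glue_middle, hmax]
  · rw [glue_right]
    simp

section recursion

variable {R : Type*} [CommSemiring R] (w : ℤ → ℕ → R)

open Classical in
theorem sum_localWeight_of_max_at {k r N : ℕ} (hN : N = k + 1 + r) (s : ℤ) :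
    ∑ σ : Perm (Fin N) with Avoids σ p132 ∧ ∀ i : Fin N, (i : ℕ) = k → (σ i : ℕ) = k + r,
        localWeight w s σ =
      sum132 w k (s + r) * w (s + r) k * sum132 w r (s - k - 1) := by
  subst hN
  rw [sum132, sum132, mul_right_comm, sum_mul_sum, ← sum_product', sum_mul]
  symm
  refine sum_bij (fun p _ => glue p.1 p.2) ?_ ?_ ?_ ?_
  · rintro ⟨τ, ρ⟩ h
    simp only [mem_product, mem_filter, mem_univ, true_and] at h ⊢
    refine ⟨(avoids_glue_iff τ ρ).2 h, fun i hi => ?_⟩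
    rw [← glue_middle τ ρ 0]
    congr 2
    exact Fin.ext (by simpa using hi)
  · rintro ⟨τ, ρ⟩ _ ⟨τ', ρ'⟩ _ h
    obtain ⟨rfl, rfl⟩ := glue_injective h
    rfl
  · intro σ h
    simp only [mem_filter, mem_univ, true_and] at h
    obtain ⟨τ, ρ, rfl⟩ := exists_glue_eq h.1 (h.2 _ (by simp))
    refine ⟨(τ, ρ), ?_, rfl⟩
    simpa using (avoids_glue_iff τ ρ).1 h.1
  · rintro ⟨τ, ρ⟩ _
    rw [localWeight_glue]
    ring

theorem sum132_zero (s : ℤ) : sum132 w 0 s = 1 := by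
  classical
  have h : ∀ σ : Perm (Fin 0), Avoids σ p132 := fun σ =>
    (avoids_p132_iff σ).2 fun i => i.elim0
  simp [sum132, localWeight, h]

theorem sum132_succ (n : ℕ) (s : ℤ) :
    sum132 w (n + 1) s = ∑ p ∈ antidiagonal n,
      sum132 w p.1 (s + p.2) * w (s + p.2) p.1 * sum132 w p.2 (s - p.1 - 1) := by
  classical
  rw [sum132, ← sum_fiberwise_of_maps_to (t := antidiagonal n)
    (g := fun σ : Perm (Fin (n + 1)) =>
      ((σ.symm (Fin.last n) : ℕ), n - (σ.symm (Fin.last n) : ℕ)))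
    (fun σ _ => by simp only [HasAntidiagonal.mem_antidiagonal]; omega)]
  refine sum_congr rfl ?_
  rintro ⟨k, r⟩ h
  rw [HasAntidiagonal.mem_antidiagonal] at h
  simp only at h ⊢
  rw [← sum_localWeight_of_max_at w (show n + 1 = k + 1 + r by omega) s, filter_filter]
  refine sum_congr (filter_congr fun σ _ => and_congr_right fun _ => ?_) fun _ _ => rfl
  rw [Prod.mk.injEq]
  constructor
  · rintro ⟨h1, -⟩ i hi
    have : i = σ.symm (Fin.last n) := Fin.ext (by omega)
    rw [this]
    simp [h]
  · intro h1
    have h2 := h1 ⟨k, by omega⟩ rfl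
    have h3 : σ ⟨k, by omega⟩ = Fin.last n := Fin.ext (by simp [h2, h])
    rw [← h3, symm_apply_apply]
    simp only [true_and]
    omega

theorem avoids_p132_symm {n : ℕ} {σ : Perm (Fin n)} (h : Avoids σ p132) :
    Avoids σ.symm p132 := by
  rw [avoids_p132_iff] at h ⊢
  rintro i j k hij hjk ⟨h1, h2⟩
  exact h _ _ _ h1 h2 (by simpa using ⟨hij, hjk⟩)

theorem lowerLeft_symm {n : ℕ} (σ : Perm (Fin n)) (i : Fin n) :
    lowerLeft σ.symm (σ i) = lowerLeft σ i := by
  refine (card_bij (fun j _ => σ j) ?_ ?_ ?_).symm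
  · intro j
    simp [and_comm]
  · intro a _ b _ h
    simpa using h
  · intro j hj
    refine ⟨σ.symm j, ?_, by simp⟩
    simpa [and_comm] using hj

theorem sum132_neg (n : ℕ) (s : ℤ) :
    sum132 (fun d m => w (-d) m) n (-s) = sum132 w n s := by
  classical
  refine sum_bij (fun σ _ => σ.symm) ?_ ?_ ?_ ?_
  · intro σ h
    simp only [mem_filter, mem_univ, true_and] at h ⊢
    exact avoids_p132_symm h
  · intro σ _ τ _ h
    simpa using congrArg Equiv.symm h
  · intro σ h
    simp only [mem_filter, mem_univ, true_and] at h
    exact ⟨σ.symm, by simpa using avoids_p132_symm h, by simp⟩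
  · intro σ _
    simp only [localWeight]
    rw [← Equiv.prod_comp σ (fun i => w ((σ.symm i : ℤ) + s - i) (lowerLeft σ.symm i))]
    refine prod_congr rfl fun i _ => ?_
    rw [lowerLeft_symm, symm_apply_apply]
    congr 1
    ring

theorem sum132_succ' (n : ℕ) (s : ℤ) :
    sum132 w (n + 1) s = ∑ p ∈ antidiagonal n,
      sum132 w p.1 (s - p.2) * w (s - p.2) p.1 * sum132 w p.2 (s + p.1 + 1) := by
  rw [← sum132_neg, sum132_succ]
  refine sum_congr rfl fun p _ => ?_
  rw [← sum132_neg w p.1, ← sum132_neg w p.2]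
  congr 1
  · congr 2 <;> ring
  · congr 1; ring

end recursion

/-- The number of crossings `(i, j)` of `σ` with the given `j`. -/
def crsAt {n : ℕ} (σ : Perm (Fin n)) (j : Fin n) : ℕ :=
  #{i : Fin n | ((i : ℕ) < j ∧ (j : ℕ) < σ i ∧ (σ i : ℕ) < σ j) ∨
    ((σ i : ℕ) < σ j ∧ (σ j : ℕ) ≤ i ∧ (i : ℕ) < j)}

theorem crs_eq_sum_crsAt {n : ℕ} (σ : Perm (Fin n)) : crs σ = ∑ j, crsAt σ j := by
  simp only [crs, crsAt, card_filter, Fintype.sum_prod_type_right]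

theorem crsAt_of_lt {n : ℕ} {σ : Perm (Fin n)} (hσ : Avoids σ p132) {j : Fin n}
    (hj : (j : ℕ) < σ j) : crsAt σ j = min (lowerLeft σ j) (σ j - j - 1) := by
  rw [avoids_p132_iff] at hσ
  set A : Finset (Fin n) := {i : Fin n | ((i : ℕ) < j ∧ (j : ℕ) < σ i ∧ (σ i : ℕ) < σ j) ∨
    ((σ i : ℕ) < σ j ∧ (σ j : ℕ) ≤ i ∧ (i : ℕ) < j)} with hA
  set S : Finset (Fin n) := {i | i < j ∧ σ i < σ j} with hS
  change #A = min #S _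
  have hAS : A ⊆ S := by
    intro i
    simp only [hA, hS, mem_filter, mem_univ, true_and, Fin.lt_def]
    omega
  have hAI : A.map σ.toEmbedding ⊆ Ioo j (σ j) := by
    intro v
    simp only [hA, mem_map, mem_filter, mem_univ, true_and, mem_Ioo, Fin.lt_def]
    rintro ⟨i, hi, rfl⟩
    simp only [coe_toEmbedding]
    omega
  have hAI' := card_le_card hAI
  rw [card_map, Fin.card_Ioo] at hAI'
  have hAS' := card_le_card hAS
  by_cases h : ∀ i ∈ S, j < σ i
  · have : S ⊆ A := by
      intro i hi
      have := h i hi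
      simp only [hA, hS, mem_filter, mem_univ, true_and, Fin.lt_def] at hi this ⊢
      omega
    have := card_le_card this
    omega
  · push Not at h
    obtain ⟨i, hi, hij⟩ := h
    simp only [hS, mem_filter, mem_univ, true_and, Fin.lt_def] at hi
    have : Ioo j (σ j) ⊆ A.map σ.toEmbedding := by
      intro v hv
      rw [mem_Ioo] at hv
      refine mem_map.2 ⟨σ.symm v, ?_, by simp⟩
      have hlt : σ.symm v < j := by
        by_contra hlt
        have hne : σ.symm v ≠ j := by
          rintro rfl
          simp at hv
        refine hσ i j (σ.symm v) hi.1 (lt_of_le_of_ne (not_lt.1 hlt) hne.symm) ?_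
        rw [apply_symm_apply]
        exact ⟨hij.trans_lt hv.1, hv.2⟩
      simp only [hA, mem_filter, mem_univ, true_and, apply_symm_apply]
      exact Or.inl ⟨hlt, hv.1, hv.2⟩
    have := card_le_card this
    rw [card_map, Fin.card_Ioo] at this
    omega

theorem crsAt_of_le {n : ℕ} {σ : Perm (Fin n)} (hσ : Avoids σ p132) {j : Fin n}
    (hj : (σ j : ℕ) ≤ j) : crsAt σ j = min (lowerLeft σ j) (j - σ j) := by
  rw [avoids_p132_iff] at hσ
  set A : Finset (Fin n) := {i : Fin n | ((i : ℕ) < j ∧ (j : ℕ) < σ i ∧ (σ i : ℕ) < σ j) ∨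
    ((σ i : ℕ) < σ j ∧ (σ j : ℕ) ≤ i ∧ (i : ℕ) < j)} with hA
  set S : Finset (Fin n) := {i | i < j ∧ σ i < σ j} with hS
  change #A = min #S _
  have hAS : A ⊆ S := by
    intro i
    simp only [hA, hS, mem_filter, mem_univ, true_and, Fin.lt_def]
    omega
  have hAI : A ⊆ Ico (σ j) j := by
    intro i
    simp only [hA, mem_filter, mem_univ, true_and, mem_Ico, Fin.lt_def, Fin.le_def]
    omega
  have hAI' := card_le_card hAI
  rw [Fin.card_Ico] at hAI'
  have hAS' := card_le_card hAS
  by_cases h : ∀ i ∈ S, σ j ≤ i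
  · have : S ⊆ A := by
      intro i hi
      have := h i hi
      simp only [hA, hS, mem_filter, mem_univ, true_and, Fin.lt_def, Fin.le_def] at hi this ⊢
      omega
    have := card_le_card this
    omega
  · push Not at h
    obtain ⟨i, hi, hij⟩ := h
    simp only [hS, mem_filter, mem_univ, true_and] at hi
    have : Ico (σ j) j ⊆ A := by
      intro l hl
      rw [mem_Ico] at hl
      have hlt : σ l < σ j := by
        by_contra hlt
        have hne : σ l ≠ σ j := σ.injective.ne hl.2.ne
        exact hσ i l j (hij.trans_le hl.1) hl.2
          ⟨hi.2, lt_of_le_of_ne (not_lt.1 hlt) hne.symm⟩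
      simp only [hA, mem_filter, mem_univ, true_and]
      exact Or.inr ⟨hlt, hl.1, hl.2⟩
    have := card_le_card this
    rw [Fin.card_Ico] at this
    omega

/-- The monomial recording fixed points, excedances and crossings of a permutation. -/
def statMonomial {R : Type*} [CommSemiring R] (x y r : R) {n : ℕ} (σ : Perm (Fin n)) : R :=
  x ^ exc σ * y ^ fp σ * r ^ (2 * (crs σ + exc σ))

/-- The local weight whose product over a `132`-avoiding permutation is `statMonomial`. -/
def crsWeight {R : Type*} [CommSemiring R] (x y r : R) (d : ℤ) (m : ℕ) : R :=
  if 0 < d then x * r ^ (2 * min (m + 1) d.toNat)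
  else if d = 0 then y
  else r ^ (2 * min m (-d).toNat)

theorem localWeight_crsWeight {R : Type*} [CommSemiring R] (x y r : R) {n : ℕ}
    {σ : Perm (Fin n)} (hσ : Avoids σ p132) :
    localWeight (crsWeight x y r) 0 σ = statMonomial x y r σ := by
  have h : ∀ i, crsWeight x y r ((σ i : ℤ) + 0 - i) (lowerLeft σ i) =
      x ^ (if (i : ℕ) < σ i then 1 else 0) * y ^ (if σ i = i then 1 else 0) *
        r ^ (2 * (crsAt σ i + if (i : ℕ) < σ i then 1 else 0)) := by
    intro i
    simp only [crsWeight, Fin.ext_iff]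
    rcases lt_trichotomy (i : ℕ) (σ i) with h | h | h
    · rw [crsAt_of_lt hσ h, if_pos (by omega), if_pos h, if_neg (by omega)]
      simp only [pow_one, pow_zero, mul_one]
      congr 3
      omega
    · rw [crsAt_of_le hσ h.symm.le, if_neg (by omega), if_pos (by omega), if_neg (by omega),
        if_pos h.symm]
      simp [h]
    · rw [crsAt_of_le hσ h.le, if_neg (by omega), if_neg (by omega), if_neg (by omega),
        if_neg (by omega)]
      simp only [pow_zero, one_mul, add_zero]
      congr 3
      omega
  simp only [localWeight, h, prod_mul_distrib, prod_pow_eq_pow_sum, statMonomial, exc, fp,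
    crs_eq_sum_crsAt, card_filter, ← mul_sum, sum_add_distrib]

section incidence

variable {K : Type*} [Field K]

/-- The generating function of `132`-avoiding permutations, seen as Dyck paths between the two given
abscissae, as an element of the incidence algebra of `ℤ`. -/
noncomputable def dyckSum (w : ℤ → ℕ → K) : IncidenceAlgebra K ℤ where
  toFun a b := if a ≤ b ∧ Even (b - a) then sum132 w ((b - a) / 2).toNat (-((a + b) / 2)) else 0
  eq_zero_of_not_le' _ _ h := if_neg fun hab => h hab.1

/-- The weight of the tunnel between two abscissae. -/
def tunnelWeight (w : ℤ → ℕ → K) (a b : ℤ) : K :=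
  w (-((a + b) / 2)) ((b - a) / 2 - 1).toNat

/-- The element of the incidence algebra supported on unit steps. -/
def unitStep (c : ℤ → K) : IncidenceAlgebra K ℤ where
  toFun a b := if b = a + 1 then c a else 0
  eq_zero_of_not_le' _ _ h := if_neg fun h' => h (by omega)

theorem unitStep_apply (c : ℤ → K) (a b : ℤ) :
    unitStep c a b = if b = a + 1 then c a else 0 := rfl

theorem unitStep_mul_apply (c : ℤ → K) (f : IncidenceAlgebra K ℤ) (a b : ℤ) :
    (unitStep c * f) a b = c a * f (a + 1) b := by
  simp only [IncidenceAlgebra.mul_apply, unitStep_apply, ite_mul, zero_mul, sum_ite_eq', mem_Icc]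
  split_ifs with h
  · rfl
  · rw [IncidenceAlgebra.apply_eq_zero_of_not_le (by omega), mul_zero]

theorem mul_unitStep_apply (c : ℤ → K) (f : IncidenceAlgebra K ℤ) (a b : ℤ) :
    (f * unitStep c) a b = f a (b - 1) * c (b - 1) := by
  have h : ∀ e, f a e * unitStep c e b = if e = b - 1 then f a (b - 1) * c (b - 1) else 0 := by
    intro e
    rw [unitStep_apply]
    by_cases he : e = b - 1
    · subst he
      simp
    · rw [if_neg (by omega), if_neg he, mul_zero]
  simp only [IncidenceAlgebra.mul_apply, h, sum_ite_eq', mem_Icc]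
  split_ifs with h
  · rfl
  · rw [IncidenceAlgebra.apply_eq_zero_of_not_le (by omega), zero_mul]

variable (w : ℤ → ℕ → K)

theorem dyckSum_of_not_even {a b : ℤ} (h : ¬ Even (b - a)) : dyckSum w a b = 0 :=
  if_neg fun h' => h h'.2

theorem dyckSum_add_two_mul {a b : ℤ} (k : ℕ) (h : b = a + 2 * k) :
    dyckSum w a b = sum132 w k (-(a + k)) := by
  change (if _ then _ else _) = _
  rw [if_pos ⟨by omega, k, by omega⟩]
  congr 1 <;> omega

theorem dyckSum_self (a : ℤ) : dyckSum w a a = 1 := by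
  rw [dyckSum_add_two_mul w 0 (by simp), sum132_zero]

theorem exists_of_dyckSum_ne_zero {a b : ℤ} (h : dyckSum w a b ≠ 0) : ∃ k : ℕ, b = a + 2 * k := by
  have h1 := IncidenceAlgebra.le_of_ne_zero h
  have h2 : Even (b - a) := by
    by_contra h2
    exact h (dyckSum_of_not_even w h2)
  obtain ⟨c, hc⟩ := h2
  exact ⟨c.toNat, by omega⟩

theorem dyckSum_first_return {a b : ℤ} (hab : a < b) :
    dyckSum w a b = ∑ g ∈ Icc (a + 1) b,
      dyckSum w (a + 1) g * (tunnelWeight w a (g + 1) * dyckSum w (g + 1) b) := by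
  by_cases hev : Even (b - a)
  · obtain ⟨c, hc⟩ := hev
    obtain ⟨n, rfl⟩ : ∃ n : ℕ, c = n + 1 := ⟨(c - 1).toNat, by omega⟩
    rw [dyckSum_add_two_mul w (n + 1) (by push_cast; omega), sum132_succ]
    refine sum_of_injOn (fun p => a + 1 + 2 * p.1) ?_ ?_ ?_ ?_
    · rintro ⟨k, l⟩ h ⟨k', l'⟩ h' hk
      simp only [mem_coe, HasAntidiagonal.mem_antidiagonal] at h h' hk
      ext <;> simp only <;> omega
    · rintro ⟨k, l⟩ h
      simp only [mem_coe, HasAntidiagonal.mem_antidiagonal, mem_Icc] at h ⊢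
      omega
    · intro g _ hg
      by_contra hne
      obtain ⟨k, hk⟩ := exists_of_dyckSum_ne_zero w (left_ne_zero_of_mul hne)
      obtain ⟨l, hl⟩ := exists_of_dyckSum_ne_zero w
        (right_ne_zero_of_mul (right_ne_zero_of_mul hne))
      refine hg ⟨(k, l), ?_, by simp only; omega⟩
      simp only [mem_coe, HasAntidiagonal.mem_antidiagonal]
      omega
    · rintro ⟨k, l⟩ h
      simp only [HasAntidiagonal.mem_antidiagonal] at h
      rw [dyckSum_add_two_mul w k rfl, dyckSum_add_two_mul w l (by omega), tunnelWeight, mul_assoc]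
      congr 1
      · congr 1
        push_cast
        omega
      · congr 1
        · congr 1
          · push_cast
            omega
          · omega
        · congr 1
          push_cast
          omega
  · rw [dyckSum_of_not_even w hev, eq_comm]
    refine sum_eq_zero fun g _ => ?_
    by_contra hne
    obtain ⟨k, hk⟩ := exists_of_dyckSum_ne_zero w (left_ne_zero_of_mul hne)
    obtain ⟨l, hl⟩ := exists_of_dyckSum_ne_zero w (right_ne_zero_of_mul (right_ne_zero_of_mul hne))
    exact hev ⟨k + l + 1, by omega⟩

theorem dyckSum_last_return {a b : ℤ} (hab : a < b) :
    dyckSum w a b = ∑ g ∈ Icc a (b - 1),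
      dyckSum w a g * (tunnelWeight w g b * dyckSum w (g + 1) (b - 1)) := by
  by_cases hev : Even (b - a)
  · obtain ⟨c, hc⟩ := hev
    obtain ⟨n, rfl⟩ : ∃ n : ℕ, c = n + 1 := ⟨(c - 1).toNat, by omega⟩
    rw [dyckSum_add_two_mul w (n + 1) (by push_cast; omega), sum132_succ']
    refine sum_of_injOn (fun p => a + 2 * p.2) ?_ ?_ ?_ ?_
    · rintro ⟨k, l⟩ h ⟨k', l'⟩ h' hk
      simp only [mem_coe, HasAntidiagonal.mem_antidiagonal] at h h' hk
      ext <;> simp only <;> omega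
    · rintro ⟨k, l⟩ h
      simp only [mem_coe, HasAntidiagonal.mem_antidiagonal, mem_Icc] at h ⊢
      omega
    · intro g _ hg
      by_contra hne
      obtain ⟨l, hl⟩ := exists_of_dyckSum_ne_zero w (left_ne_zero_of_mul hne)
      obtain ⟨k, hk⟩ := exists_of_dyckSum_ne_zero w
        (right_ne_zero_of_mul (right_ne_zero_of_mul hne))
      refine hg ⟨(k, l), ?_, by simp only; omega⟩
      simp only [mem_coe, HasAntidiagonal.mem_antidiagonal]
      omega
    · rintro ⟨k, l⟩ h
      simp only [HasAntidiagonal.mem_antidiagonal] at h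
      rw [dyckSum_add_two_mul w l rfl, dyckSum_add_two_mul w k (by omega), tunnelWeight, mul_comm,
        mul_comm (sum132 w k _)]
      congr 1
      · congr 1
        push_cast
        omega
      · congr 1
        · congr 1
          · push_cast
            omega
          · omega
        · congr 1
          push_cast
          omega
  · rw [dyckSum_of_not_even w hev, eq_comm]
    refine sum_eq_zero fun g _ => ?_
    by_contra hne
    obtain ⟨k, hk⟩ := exists_of_dyckSum_ne_zero w (left_ne_zero_of_mul hne)
    obtain ⟨l, hl⟩ := exists_of_dyckSum_ne_zero w (right_ne_zero_of_mul (right_ne_zero_of_mul hne))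
    exact hev ⟨k + l + 1, by omega⟩

end incidence

section peeling

variable {K : Type*} [Field K] (x y r : K)

/-- The generating function of the paths between two abscissae, weighted by `crsWeight`. -/
noncomputable abbrev pathSum : IncidenceAlgebra K ℤ := dyckSum (crsWeight x y r)

/-- Down steps closing a tunnel opened further to the left. -/
def downStep : IncidenceAlgebra K ℤ := unitStep fun a => r ^ min (a + 1) (-(a + 1))

/-- Up steps opening a tunnel closed further to the right. -/
def upStep : IncidenceAlgebra K ℤ := unitStep fun a => r ^ min a (-a - 2)

variable {r}

theorem tunnelWeight_left (hr : r ≠ 0) {a b : ℤ} {k : ℕ} (hb : b = a + 2 * k + 2) (h : b < -a) :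
    tunnelWeight (crsWeight x y r) a b = x * r ^ (-a) * r ^ min b (-b) := by
  rw [tunnelWeight, crsWeight, if_pos (by omega), mul_assoc, ← zpow_add₀ hr, ← zpow_natCast]
  congr 2
  push_cast
  omega

theorem tunnelWeight_right (hr : r ≠ 0) {a b : ℤ} {k : ℕ} (hb : b = a + 2 * k + 2) (h : -a < b) :
    tunnelWeight (crsWeight x y r) a b = r ^ b * r ^ min a (-a - 2) := by
  rw [tunnelWeight, crsWeight, if_neg (by omega), if_neg (by omega), ← zpow_add₀ hr, ← zpow_natCast]
  congr 1
  push_cast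
  omega

theorem tunnelWeight_neg_self (b : ℤ) : tunnelWeight (crsWeight x y r) (-b) b = y := by
  simp [tunnelWeight, crsWeight]

theorem pathSum_peel_left (hr : r ≠ 0) {a b : ℤ} (hb : b < -a) :
    pathSum x y r a b = (1 : IncidenceAlgebra K ℤ) a b +
      x * r ^ (-a) * (pathSum x y r * (downStep r * pathSum x y r)) (a + 1) b := by
  rw [IncidenceAlgebra.one_apply]
  rcases lt_trichotomy a b with hab | rfl | hab
  · rw [dyckSum_first_return _ hab, if_neg hab.ne, zero_add, IncidenceAlgebra.mul_apply, mul_sum]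
    refine sum_congr rfl fun g hg => ?_
    rw [downStep, unitStep_mul_apply]
    by_cases h1 : pathSum x y r (a + 1) g = 0
    · simp [h1]
    by_cases h2 : pathSum x y r (g + 1) b = 0
    · simp [h2]
    obtain ⟨k, hk⟩ := exists_of_dyckSum_ne_zero _ h1
    have h3 := IncidenceAlgebra.le_of_ne_zero h2
    rw [tunnelWeight_left x y hr (k := k) (by omega) (by omega)]
    ring
  · rw [dyckSum_self, if_pos rfl, IncidenceAlgebra.apply_eq_zero_of_not_le (by omega), mul_zero,
      add_zero]
  · rw [IncidenceAlgebra.apply_eq_zero_of_not_le (by omega), if_neg hab.ne',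
      IncidenceAlgebra.apply_eq_zero_of_not_le (by omega), mul_zero, add_zero]

theorem pathSum_peel_right (hr : r ≠ 0) {a b : ℤ} (hb : -a < b) :
    pathSum x y r a b = (1 : IncidenceAlgebra K ℤ) a b +
      r ^ b * (pathSum x y r * (upStep r * pathSum x y r)) a (b - 1) := by
  rw [IncidenceAlgebra.one_apply]
  rcases lt_trichotomy a b with hab | rfl | hab
  · rw [dyckSum_last_return _ hab, if_neg hab.ne, zero_add, IncidenceAlgebra.mul_apply, mul_sum]
    refine sum_congr rfl fun g hg => ?_
    rw [upStep, unitStep_mul_apply]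
    by_cases h2 : pathSum x y r (g + 1) (b - 1) = 0
    · simp [h2]
    obtain ⟨k, hk⟩ := exists_of_dyckSum_ne_zero _ h2
    rw [mem_Icc] at hg
    rw [tunnelWeight_right x y hr (k := k) (by omega) (by omega)]
    ring
  · rw [dyckSum_self, if_pos rfl, IncidenceAlgebra.apply_eq_zero_of_not_le (by omega), mul_zero,
      add_zero]
  · rw [IncidenceAlgebra.apply_eq_zero_of_not_le (by omega), if_neg hab.ne',
      IncidenceAlgebra.apply_eq_zero_of_not_le (by omega), mul_zero, add_zero]

theorem pathSum_neg_self (hr : r ≠ 0) {b : ℤ} (hb : 0 < b) :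
    pathSum x y r (-b) b =
      r ^ b * (pathSum x y r * (upStep r * pathSum x y r)) (-b) (b - 1) +
        (y - 1) * pathSum x y r (-b + 1) (b - 1) := by
  have key : ∀ g ∈ Icc (-b) (b - 1), pathSum x y r (-b) g *
      (tunnelWeight (crsWeight x y r) g b * pathSum x y r (g + 1) (b - 1)) =
      r ^ b * (pathSum x y r (-b) g * (upStep r * pathSum x y r) g (b - 1)) +
        if g = -b then (y - 1) * pathSum x y r (-b + 1) (b - 1) else 0 := by
    intro g hg
    rw [mem_Icc] at hg
    rw [upStep, unitStep_mul_apply]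
    split_ifs with h
    · subst h
      have h1 : r ^ b * r ^ min (-b) (- -b - 2) = 1 := by
        rw [← zpow_add₀ hr, show b + min (-b) (- -b - 2) = 0 by omega, zpow_zero]
      rw [tunnelWeight_neg_self, dyckSum_self]
      linear_combination (-pathSum x y r (-b + 1) (b - 1)) * h1
    · by_cases h2 : pathSum x y r (g + 1) (b - 1) = 0
      · simp [h2]
      obtain ⟨k, hk⟩ := exists_of_dyckSum_ne_zero _ h2
      rw [tunnelWeight_right x y hr (k := k) (by omega) (by omega)]
      ring
  rw [dyckSum_last_return _ (by omega), sum_congr rfl key, sum_add_distrib, ← mul_sum,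
    ← IncidenceAlgebra.mul_apply, sum_ite_eq', if_pos (by rw [mem_Icc]; omega)]

theorem pathSum_mul_peel_left (hr : r ≠ 0) (f : IncidenceAlgebra K ℤ) {a b : ℤ} (hb : b < -a) :
    (pathSum x y r * f) a b =
      f a b + x * r ^ (-a) * (pathSum x y r * downStep r * (pathSum x y r * f)) (a + 1) b := by
  rw [show pathSum x y r * downStep r * (pathSum x y r * f) =
    pathSum x y r * (downStep r * pathSum x y r) * f by simp only [mul_assoc]]
  by_cases hab : a ≤ b
  · rw [IncidenceAlgebra.mul_apply]
    have h : ∀ e ∈ Icc a b, pathSum x y r a e * f e b =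
        (if a = e then f a b else 0) + x * r ^ (-a) *
          ((pathSum x y r * (downStep r * pathSum x y r)) (a + 1) e * f e b) := by
      intro e he
      rw [mem_Icc] at he
      rw [pathSum_peel_left x y hr (by omega), IncidenceAlgebra.one_apply]
      split_ifs with h
      · subst h
        ring
      · ring
    rw [sum_congr rfl h, sum_add_distrib, sum_ite_eq, if_pos (by simpa using hab), ← mul_sum,
      IncidenceAlgebra.mul_apply _ f]
    congr 2
    refine (sum_subset (Icc_subset_Icc_left (by omega)) fun e _ he => ?_).symm
    rw [IncidenceAlgebra.apply_eq_zero_of_not_le (by simp_all), zero_mul]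
  · rw [IncidenceAlgebra.apply_eq_zero_of_not_le hab, IncidenceAlgebra.apply_eq_zero_of_not_le hab,
      IncidenceAlgebra.apply_eq_zero_of_not_le (by omega), mul_zero, add_zero]

theorem mul_pathSum_peel_right (hr : r ≠ 0) (f : IncidenceAlgebra K ℤ) {b : ℤ} (hb : 0 < b)
    (hf : f (-b) (-b) = 0) :
    (f * pathSum x y r) (-b) b =
      f (-b) b + r ^ b * (f * pathSum x y r * (upStep r * pathSum x y r)) (-b) (b - 1) := by
  rw [mul_assoc f (pathSum x y r), IncidenceAlgebra.mul_apply]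
  have h : ∀ e ∈ Icc (-b) b, f (-b) e * pathSum x y r e b =
      (if e = b then f (-b) b else 0) + r ^ b *
        (f (-b) e * (pathSum x y r * (upStep r * pathSum x y r)) e (b - 1)) := by
    intro e he
    rw [mem_Icc] at he
    by_cases h : e = -b
    · subst h
      rw [hf, if_neg (by omega)]
      ring
    rw [pathSum_peel_right x y hr (by omega), IncidenceAlgebra.one_apply]
    split_ifs with h
    · subst h
      ring
    · ring
  rw [sum_congr rfl h, sum_add_distrib, sum_ite_eq', if_pos (by rw [mem_Icc]; omega), ← mul_sum,
    IncidenceAlgebra.mul_apply f]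
  congr 2
  refine (sum_subset (Icc_subset_Icc_right (by omega)) fun e _ he => ?_).symm
  rw [IncidenceAlgebra.apply_eq_zero_of_not_le (a := e) (by simp_all), mul_zero]

variable (r) in
/-- The generating function of paths with `p` unmatched down steps and `q` unmatched up steps. -/
noncomputable def unmatchedSum (p q : ℕ) : IncidenceAlgebra K ℤ :=
  (pathSum x y r * downStep r) ^ p * pathSum x y r * (upStep r * pathSum x y r) ^ q

theorem unmatchedSum_succ_left (hr : r ≠ 0) (p q : ℕ) {a b : ℤ} (hb : b < -a) :
    unmatchedSum x y r (p + 1) q a b =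
      r ^ min (a + 1) (-(a + 1)) * unmatchedSum x y r p q (a + 1) b +
        x * r ^ (-a) * unmatchedSum x y r (p + 2) q (a + 1) b := by
  have h := pathSum_mul_peel_left x y hr (downStep r * unmatchedSum x y r p q) hb
  rw [downStep, unitStep_mul_apply, ← downStep] at h
  convert h using 2
  · simp only [unmatchedSum, pow_succ', mul_assoc]
  · simp only [unmatchedSum, pow_succ', mul_assoc]

theorem unmatchedSum_zero_succ_left (hr : r ≠ 0) (q : ℕ) {a b : ℤ} (hb : b < -a) :
    unmatchedSum x y r 0 (q + 1) a b =
      r ^ min a (-a - 2) * unmatchedSum x y r 0 q (a + 1) b +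
        x * r ^ (-a) * unmatchedSum x y r 1 (q + 1) (a + 1) b := by
  have h := pathSum_mul_peel_left x y hr (upStep r * unmatchedSum x y r 0 q) hb
  rw [upStep, unitStep_mul_apply, ← upStep] at h
  convert h using 2
  · simp only [unmatchedSum, pow_succ', pow_zero, one_mul, mul_assoc]
  · simp only [unmatchedSum, pow_succ', pow_zero, one_mul, mul_one, mul_assoc]

theorem unmatchedSum_succ_right (hr : r ≠ 0) (p q : ℕ) {b : ℤ} (hb : 0 < b) :
    unmatchedSum x y r p (q + 1) (-b) b =
      r ^ min (b - 1) (-(b - 1) - 2) * unmatchedSum x y r p q (-b) (b - 1) +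
        r ^ b * unmatchedSum x y r p (q + 2) (-b) (b - 1) := by
  have h := mul_pathSum_peel_right x y hr (unmatchedSum x y r p q * upStep r) hb (by
    rw [upStep, mul_unitStep_apply, IncidenceAlgebra.apply_eq_zero_of_not_le (by omega), zero_mul])
  rw [upStep, mul_unitStep_apply, ← upStep, mul_comm (unmatchedSum x y r p q _ _)] at h
  convert h using 2
  · simp only [unmatchedSum, pow_succ, mul_assoc]
  · simp only [unmatchedSum, pow_succ, mul_assoc]

theorem unmatchedSum_succ_zero_right (hr : r ≠ 0) (p : ℕ) {b : ℤ} (hb : 0 < b) :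
    unmatchedSum x y r (p + 1) 0 (-b) b =
      r ^ min b (-b) * unmatchedSum x y r p 0 (-b) (b - 1) +
        r ^ b * unmatchedSum x y r (p + 1) 1 (-b) (b - 1) := by
  have h := mul_pathSum_peel_right x y hr (unmatchedSum x y r p 0 * downStep r) hb (by
    rw [downStep, mul_unitStep_apply, IncidenceAlgebra.apply_eq_zero_of_not_le (by omega),
      zero_mul])
  rw [downStep, mul_unitStep_apply, ← downStep, mul_comm (unmatchedSum x y r p 0 _ _),
    sub_add_cancel] at h
  convert h using 2
  · simp only [unmatchedSum, pow_succ, pow_zero, mul_one, mul_assoc]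
  · simp only [unmatchedSum, pow_succ, pow_zero, one_mul, mul_one, mul_assoc]

end peeling

/-- The generating function of the Motzkin paths of length `m` from height `k` down to `0` that
encode permutations avoiding `321`. -/
def motzkinSum {R : Type*} [CommSemiring R] (x y r : R) : ℕ → ℕ → R
  | 0, 0 => 1
  | 0, _ + 1 => 0
  | m + 1, 0 => y * motzkinSum x y r m 0 + x * r ^ 2 * motzkinSum x y r m 1
  | m + 1, k + 1 =>
    x * r ^ (2 * (k + 2)) * motzkinSum x y r m (k + 2) +
      (1 + x) * r ^ (2 * (k + 1)) * motzkinSum x y r m (k + 1) +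
      r ^ (2 * k) * motzkinSum x y r m k

section sum132

variable {K : Type*} [Field K] (x y : K) {r : K}

theorem unmatchedSum_neg_succ (hr : r ≠ 0) {m : ℕ} {g : ℕ → K}
    (hg : ∀ p q k : ℕ, p + q = 2 * k → unmatchedSum x y r p q (-m) m = r ^ p * g k)
    {p q k : ℕ} (h : p + q = 2 * k + 1) :
    unmatchedSum x y r p q (-(m + 1)) m =
      r ^ p * (r ^ (-(m + 1) : ℤ) * g k + x * r ^ (m + 2) * g (k + 1)) := by
  have hm : r ^ (-m : ℤ) = r * r ^ (-(m + 1) : ℤ) := by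
    rw [← zpow_one_add₀ hr]
    congr 1
    ring
  have hm' : r ^ (m + 1 : ℤ) = r ^ (m + 1) := by norm_cast
  have he : -(m + 1 : ℤ) + 1 = -m := by ring
  rcases p with _ | p
  · obtain ⟨q, rfl⟩ : ∃ q', q = q' + 1 := ⟨q - 1, by omega⟩
    rw [unmatchedSum_zero_succ_left x y hr q (by omega), he, neg_neg, hm',
      hg 0 q k (by omega), hg 1 (q + 1) (k + 1) (by omega),
      show min (-(m + 1 : ℤ)) (m + 1 - 2) = -(m + 1) by omega]
    ring
  · rw [unmatchedSum_succ_left x y hr p q (by omega), he, neg_neg, neg_neg, hm',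
      hg p q k (by omega), hg (p + 2) q (k + 1) (by omega),
      show min (-m : ℤ) m = -m by omega, hm]
    ring

theorem unmatchedSum_zero_zero (p q : ℕ) :
    unmatchedSum x y r p q 0 0 = if p = 0 ∧ q = 0 then 1 else 0 := by
  rcases q with _ | q
  · rcases p with _ | p
    · simp [unmatchedSum, dyckSum_self]
    · simp [unmatchedSum, pow_succ, IncidenceAlgebra.mul_apply, downStep, unitStep_apply]
  · simp [unmatchedSum, pow_succ, IncidenceAlgebra.mul_apply, upStep, unitStep_apply]

theorem unmatchedSum_neg_self (hr : r ≠ 0) (m : ℕ) : ∀ p q k : ℕ, p + q = 2 * k →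
    unmatchedSum x y r p q (-m) m =
      r ^ p * (r ^ (-((2 * m + 1) * k) : ℤ) * motzkinSum x y r m k) := by
  induction m with
  | zero =>
    intro p q k h
    rw [Nat.cast_zero, neg_zero, unmatchedSum_zero_zero]
    rcases k with _ | k
    · rw [if_pos (by omega), show p = 0 by omega]
      simp [motzkinSum]
    · rw [if_neg (by omega)]
      simp [motzkinSum]
  | succ m ih =>
    intro p q k h
    have half {p q k : ℕ} (h : p + q = 2 * k + 1) := unmatchedSum_neg_succ x y hr ih h
    have hb : (m + 1 : ℤ) - 1 = m := by ring
    have hm' : r ^ (m + 1 : ℤ) = r ^ (m + 1) := by norm_cast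
    have h1 : r ^ (m + 1) * r ^ (-(m + 1) : ℤ) = 1 := by
      rw [← hm', ← zpow_add₀ hr, add_neg_cancel, zpow_zero]
    push_cast
    rcases k with _ | k
    · obtain ⟨rfl, rfl⟩ : p = 0 ∧ q = 0 := by omega
      have hp : unmatchedSum x y r 0 0 = pathSum x y r := by simp [unmatchedSum]
      have h0 := ih 0 0 0 rfl
      have h2 := half (p := 0) (q := 1) (k := 0) rfl
      rw [show unmatchedSum x y r 0 1 = pathSum x y r * (upStep r * pathSum x y r) by
        simp [unmatchedSum]] at h2
      have h3 : r ^ (2 * m + 1) * r ^ (-((2 * m + 1) * (0 + 1 : ℕ)) : ℤ) = 1 := by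
        rw [← zpow_natCast, ← zpow_add₀ hr]
        simp
      rw [hp] at h0 ⊢
      rw [pathSum_neg_self x y hr (by omega), hb, h2, show -(m + 1 : ℤ) + 1 = -m by ring, h0, hm']
      simp only [motzkinSum, Nat.cast_zero, mul_zero, neg_zero, zpow_zero, pow_zero, one_mul]
      linear_combination motzkinSum x y r m 0 * h1 + x * r ^ 2 * motzkinSum x y r m 1 * h3
    · have key : r ^ (-(m + 2) : ℤ) * (r ^ (-(m + 1) : ℤ) *
            (r ^ (-((2 * m + 1) * k) : ℤ) * motzkinSum x y r m k) +
            x * r ^ (m + 2) * (r ^ (-((2 * m + 1) * (k + 1 : ℕ)) : ℤ) * motzkinSum x y r m (k + 1))) +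
          r ^ (m + 1) * (r ^ (-(m + 1) : ℤ) *
            (r ^ (-((2 * m + 1) * (k + 1 : ℕ)) : ℤ) * motzkinSum x y r m (k + 1)) +
            x * r ^ (m + 2) *
              (r ^ (-((2 * m + 1) * (k + 1 + 1 : ℕ)) : ℤ) * motzkinSum x y r m (k + 2))) =
          r ^ (-((2 * (m + 1) + 1) * (k + 1)) : ℤ) * motzkinSum x y r (m + 1) (k + 1) := by
        have e0 : r ^ (-(m + 2) : ℤ) * r ^ (-(m + 1) : ℤ) * r ^ (-((2 * m + 1) * k) : ℤ) =
            r ^ (-((2 * (m + 1) + 1) * (k + 1)) : ℤ) * r ^ (2 * k) := by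
          rw [← zpow_natCast r (2 * k), ← zpow_add₀ hr, ← zpow_add₀ hr, ← zpow_add₀ hr]
          push_cast
          congr 1
          ring
        have e1 : r ^ (-((2 * m + 1) * (k + 1 : ℕ)) : ℤ) =
            r ^ (-((2 * (m + 1) + 1) * (k + 1)) : ℤ) * r ^ (2 * (k + 1)) := by
          rw [← zpow_natCast r (2 * (k + 1)), ← zpow_add₀ hr]
          push_cast
          congr 1
          ring
        have e2 : r ^ (m + 1) * r ^ (m + 2) * r ^ (-((2 * m + 1) * (k + 1 + 1 : ℕ)) : ℤ) =
            r ^ (-((2 * (m + 1) + 1) * (k + 1)) : ℤ) * r ^ (2 * (k + 2)) := by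
          rw [← zpow_natCast r (2 * (k + 2)), ← zpow_natCast r (m + 1), ← zpow_natCast r (m + 2),
            ← zpow_add₀ hr, ← zpow_add₀ hr, ← zpow_add₀ hr]
          push_cast
          congr 1
          ring
        have h2 : r ^ (-(m + 2) : ℤ) * r ^ (m + 2) = 1 := by
          rw [← zpow_natCast r, ← zpow_add₀ hr]
          simp
        rw [motzkinSum]
        linear_combination motzkinSum x y r m k * e0 + x * motzkinSum x y r m (k + 2) * e2 +
          (1 + x) * motzkinSum x y r m (k + 1) * e1 +
          motzkinSum x y r m (k + 1) * r ^ (-((2 * m + 1) * (k + 1 : ℕ)) : ℤ) * (h1 + x * h2)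
      rw [Nat.cast_succ k, ← key]
      rcases q with _ | q
      · obtain ⟨p, rfl⟩ : ∃ p', p = p' + 1 := ⟨p - 1, by omega⟩
        rw [unmatchedSum_succ_zero_right x y hr p (by omega), hb, hm',
          half (k := k) (by omega), half (k := k + 1) (by omega),
          show min (m + 1 : ℤ) (-(m + 1)) = -(m + 2) + 1 by omega, zpow_add_one₀ hr]
        ring
      · rw [unmatchedSum_succ_right x y hr p q (by omega), hb, hm',
          half (k := k) (by omega), half (k := k + 1) (by omega),
          show min (m : ℤ) (-m - 2) = -(m + 2) by omega]
        ring

open Classical in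
theorem sum_statMonomial_avoids_p132 (hr : r ≠ 0) (n : ℕ) :
    ∑ σ : Perm (Fin n) with Avoids σ p132, statMonomial x y r σ = motzkinSum x y r n 0 := by
  have h := unmatchedSum_neg_self x y hr n 0 0 0 rfl
  have hp : unmatchedSum x y r 0 0 = pathSum x y r := by simp [unmatchedSum]
  rw [hp, dyckSum_add_two_mul _ n (by ring), neg_add_cancel, neg_zero] at h
  simp only [Nat.cast_zero, mul_zero, neg_zero, zpow_zero, pow_zero, one_mul] at h
  rw [← h, sum132]
  refine sum_congr rfl fun σ hσ => (localWeight_crsWeight x y r ?_).symm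
  simpa using hσ

end sum132

section paths

/-- The height increment of a letter, whose components say whether the step opens, respectively
closes, an arc. -/
def stepHeight (c : Bool × Bool) : ℤ :=
  (if c.1 then 1 else 0) - if c.2 then 1 else 0

/-- The height after `k` steps of the path that starts at height `h` and has the letters `f`. -/
def pathHeight (h : ℤ) {n : ℕ} (f : Fin n → Bool × Bool) (k : ℕ) : ℤ :=
  h + ∑ i : Fin n with i.val < k, stepHeight (f i)

theorem pathHeight_zero (h : ℤ) {n : ℕ} (f : Fin n → Bool × Bool) : pathHeight h f 0 = h := by
  simp [pathHeight]

theorem pathHeight_succ (h : ℤ) {n : ℕ} (f : Fin n → Bool × Bool) (k : Fin n) :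
    pathHeight h f (k + 1) = pathHeight h f k + stepHeight (f k) := by
  have : univ.filter (fun i : Fin n => i.val < k + 1) =
      insert k (univ.filter fun i : Fin n => i.val < k) := by
    ext i
    simp only [mem_filter, mem_univ, true_and, mem_insert, Fin.ext_iff]
    omega
  rw [pathHeight, pathHeight, this, sum_insert (by simp)]
  ring

theorem pathHeight_cons_succ (h : ℤ) {n : ℕ} (c : Bool × Bool) (f : Fin n → Bool × Bool) (k : ℕ) :
    pathHeight h (Fin.cons c f : Fin (n + 1) → Bool × Bool) (k + 1) =
      pathHeight (h + stepHeight c) f k := by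
  simp only [pathHeight, sum_filter, Fin.sum_univ_succ, Fin.cons_zero, Fin.cons_succ, Fin.val_zero,
    Fin.val_succ, Nat.zero_lt_succ, if_true, Nat.add_lt_add_iff_right]
  ring

variable {R : Type*} [CommSemiring R] (x y r : R)

/-- The weight of a letter read at height `a`; it vanishes if an arc is closed at height `0`. -/
def letterWeight (a : ℤ) (c : Bool × Bool) : R :=
  if c.2 ∧ a ≤ 0 then 0
  else x ^ (if c.1 then 1 else 0) * y ^ (if ¬ c.1 ∧ ¬ c.2 ∧ a = 0 then 1 else 0) *
    r ^ (2 * (a + stepHeight c).toNat)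

/-- The weight of a path, which vanishes unless the path ends at height `0`. -/
def pathWeight (h : ℤ) {n : ℕ} (f : Fin n → Bool × Bool) : R :=
  (∏ k : Fin n, letterWeight x y r (pathHeight h f k) (f k)) * if pathHeight h f n = 0 then 1 else 0

theorem pathWeight_cons (h : ℤ) {n : ℕ} (c : Bool × Bool) (f : Fin n → Bool × Bool) :
    pathWeight x y r h (Fin.cons c f : Fin (n + 1) → Bool × Bool) =
      letterWeight x y r h c * pathWeight x y r (h + stepHeight c) f := by
  simp only [pathWeight, Fin.prod_univ_succ, Fin.cons_zero, Fin.cons_succ, Fin.val_zero,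
    Fin.val_succ, pathHeight_zero, pathHeight_cons_succ, mul_assoc]

theorem sum_pathWeight (n h : ℕ) :
    ∑ f : Fin n → Bool × Bool, pathWeight x y r h f = motzkinSum x y r n h := by
  induction n generalizing h with
  | zero => cases h <;> simp [pathWeight, pathHeight, motzkinSum]; omega
  | succ n ih =>
    rw [← Fintype.sum_equiv (Fin.consEquiv fun _ : Fin (n + 1) => Bool × Bool)
      (fun p => pathWeight x y r h (Fin.cons p.1 p.2 : Fin (n + 1) → Bool × Bool)) _ fun _ => rfl]
    simp only [pathWeight_cons, Fintype.sum_prod_type, ← mul_sum, Fintype.sum_bool]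
    rcases h with _ | h
    · have h1 := ih 0
      have h2 := ih 1
      simp [letterWeight, stepHeight, motzkinSum] at h1 h2 ⊢
      rw [h1, h2]
      ring
    · have h1 := ih h
      have h2 := ih (h + 1)
      have h3 := ih (h + 2)
      have e1 : (h : ℤ) + 1 + 1 = h + 2 := by ring
      have e0 : ¬ (h : ℤ) + 1 ≤ 0 := by omega
      have e2 : ¬ (h : ℤ) + 1 = 0 := by omega
      have e3 : ((h : ℤ) + 1).toNat = h + 1 := by omega
      have e4 : ((h : ℤ) + 2).toNat = h + 2 := by omega
      simp [letterWeight, stepHeight, motzkinSum, e0, e1, e2, e3, e4] at h1 h2 h3 ⊢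
      rw [h1, h2, h3]
      ring

theorem pathHeight_nonneg {n : ℕ} {f : Fin n → Bool × Bool}
    (hf : ∀ k, (f k).2 → 0 < pathHeight 0 f k) {k : ℕ} (hk : k ≤ n) : 0 ≤ pathHeight 0 f k := by
  induction k with
  | zero => exact (pathHeight_zero 0 f).ge
  | succ k ih =>
    have h1 := pathHeight_succ 0 f ⟨k, hk⟩
    have h2 := hf ⟨k, hk⟩
    have h3 := ih (by omega)
    simp only [stepHeight] at h1 h2
    grind

end paths

section cut

variable {n : ℕ} (σ : Perm (Fin n))

/-- The number of arcs `i ↦ σ i` that go up across `k`. -/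
def cutHeight (k : ℕ) : ℕ :=
  #{i : Fin n | i.val < k ∧ k ≤ σ i}

theorem cutHeight_eq_card_down (k : ℕ) : cutHeight σ k = #{i : Fin n | k ≤ i ∧ (σ i).val < k} := by
  have h1 : #{i : Fin n | i.val < k} = cutHeight σ k + #{i : Fin n | i.val < k ∧ (σ i).val < k} := by
    rw [cutHeight, ← card_filter_add_card_filter_not (fun i : Fin n => k ≤ σ i), filter_filter,
      filter_filter]
    simp only [not_le]
  have h2 : #{i : Fin n | (σ i).val < k} =
      #{i : Fin n | k ≤ i ∧ (σ i).val < k} + #{i : Fin n | i.val < k ∧ (σ i).val < k} := by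
    rw [← card_filter_add_card_filter_not (fun i : Fin n => k ≤ i), filter_filter, filter_filter]
    simp only [not_le, and_comm]
  have h3 : #{i : Fin n | (σ i).val < k} = #{i : Fin n | i.val < k} :=
    card_equiv σ (by simp)
  omega

variable {σ}

theorem exists_down_of_up {k : ℕ} {i : Fin n} (h1 : i.val < k) (h2 : k ≤ σ i) :
    ∃ j : Fin n, k ≤ j ∧ (σ j).val < k := by
  have h : 0 < cutHeight σ k := card_pos.2 ⟨i, by simp [h1, h2]⟩
  rw [cutHeight_eq_card_down, card_pos] at h
  obtain ⟨j, hj⟩ := h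
  exact ⟨j, by simpa using hj⟩

theorem exists_up_of_down {k : ℕ} {j : Fin n} (h1 : k ≤ j) (h2 : (σ j).val < k) :
    ∃ i : Fin n, i.val < k ∧ k ≤ σ i := by
  have h : 0 < #{i : Fin n | k ≤ i ∧ (σ i).val < k} := card_pos.2 ⟨j, by simp [h1, h2]⟩
  rw [← cutHeight_eq_card_down, cutHeight, card_pos] at h
  obtain ⟨j, hj⟩ := h
  exact ⟨j, by simpa using hj⟩

theorem apply_lt_apply_of_avoids_p321 (hσ : Avoids σ p321) {i j : Fin n}
    (h : i < σ i ↔ j < σ j) (hij : i < j) : σ i < σ j := by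
  rw [avoids_p321_iff] at hσ
  by_contra hc
  have hne : σ j < σ i := lt_of_le_of_ne (not_lt.1 hc) fun h => hij.ne (σ.injective h.symm)
  by_cases hj : j < σ j
  · obtain ⟨l, hl1, hl2⟩ := exists_down_of_up (σ := σ) (k := j + 1) (i := i) (by omega) (by omega)
    exact hσ i j l hij (by omega) ⟨by omega, hne⟩
  · obtain ⟨l, hl1, hl2⟩ := exists_up_of_down (σ := σ) (k := i) (j := j) (by omega) (by omega)
    have : σ l ≠ σ i := fun h => hl1.ne (congrArg Fin.val (σ.injective h))
    exact hσ l i j (by omega) hij ⟨hne, by omega⟩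

theorem crs_eq_sum (σ : Perm (Fin n)) :
    crs σ = ∑ j, (#{i | i < j ∧ j < σ i ∧ σ i < σ j} + #{l | σ j < σ l ∧ σ l ≤ j ∧ j < l}) := by
  simp only [crs, card_filter, sum_add_distrib]
  rw [← Fintype.sum_prod_type_right', ← Fintype.sum_prod_type', ← sum_add_distrib]
  refine sum_congr rfl fun q _ => ?_
  simp only [Fin.lt_def, Fin.le_def]
  split_ifs <;> first | rfl | omega

theorem sum_cutHeight (hσ : Avoids σ p321) : ∑ k : Fin n, cutHeight σ (k + 1) = crs σ + exc σ := by
  rw [crs_eq_sum, exc, card_filter, ← sum_add_distrib]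
  refine sum_congr rfl fun j _ => ?_
  split_ifs with h
  · have h1 : ({l | σ j < σ l ∧ σ l ≤ j ∧ j < l} : Finset (Fin n)) = ∅ := by
      ext l
      simp
      omega
    have h2 : ({i | i.val < j + 1 ∧ j + 1 ≤ (σ i).val} : Finset (Fin n)) =
        insert j ({i | i < j ∧ j < σ i ∧ σ i < σ j} : Finset (Fin n)) := by
      ext i
      simp only [mem_filter, mem_univ, true_and, mem_insert]
      constructor
      · rintro ⟨hi1, hi2⟩
        rcases eq_or_ne i j with rfl | hij
        · exact .inl rfl
        · exact .inr ⟨by omega, by omega,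
            apply_lt_apply_of_avoids_p321 hσ ⟨fun _ => by omega, fun _ => by omega⟩ (by omega)⟩
      · rintro (rfl | hi) <;> omega
    rw [cutHeight, h1, h2, card_insert_of_notMem (by simp), card_empty, add_zero]
  · have h1 : ({i | i < j ∧ j < σ i ∧ σ i < σ j} : Finset (Fin n)) = ∅ := by
      ext l
      simp
      omega
    rw [cutHeight_eq_card_down, h1, card_empty, zero_add, add_zero]
    congr 1
    ext l
    simp only [mem_filter, mem_univ, true_and]
    constructor
    · rintro ⟨hi1, hi2⟩
      exact ⟨apply_lt_apply_of_avoids_p321 hσ ⟨fun _ => by omega, fun _ => by omega⟩ (by omega),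
        by omega, by omega⟩
    · omega

/-- The word recording the positions and the values of the excedances of a permutation. -/
def excWord (σ : Perm (Fin n)) (k : Fin n) : Bool × Bool :=
  (k < σ k, σ.symm k < k)

theorem pathHeight_excWord (σ : Perm (Fin n)) (k : ℕ) :
    pathHeight 0 (excWord σ) k = cutHeight σ k := by
  have h1 : #{i : Fin n | i.val < k ∧ i < σ i} =
      cutHeight σ k + #{i : Fin n | (σ i).val < k ∧ i < σ i} := by
    rw [cutHeight, ← card_filter_add_card_filter_not (fun i : Fin n => k ≤ σ i), filter_filter,
      filter_filter]
    congr 2 <;> ext i <;> simp <;> omega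
  have h2 : #{i : Fin n | (σ i).val < k ∧ i < σ i} = #{i : Fin n | i.val < k ∧ σ.symm i < i} :=
    card_equiv σ (by simp)
  simp only [pathHeight, stepHeight, excWord, sum_sub_distrib, decide_eq_true_eq, ← sum_filter,
    filter_filter, sum_const, nsmul_eq_mul, mul_one, h1, ← h2]
  push_cast
  ring

theorem excWord_injOn : Set.InjOn (excWord (n := n)) {σ | Avoids σ p321} := by
  intro σ hσ τ hτ h
  have hI : ∀ i, i < σ i ↔ i < τ i := fun i => by
    simpa [excWord] using congrArg Prod.fst (congrFun h i)
  have hV : ∀ i, σ.symm i < i ↔ τ.symm i < i := fun i => by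
    simpa [excWord] using congrArg Prod.snd (congrFun h i)
  have key : ∀ (σ τ : Perm (Fin n)), Avoids τ p321 → (∀ i, i < σ i ↔ i < τ i) →
      (∀ i, σ.symm i < i ↔ τ.symm i < i) → ∀ i, (∀ j < i, σ j = τ j) → ¬ σ i < τ i := by
    intro σ τ hτ hI hV i ih hlt
    have hj : τ (τ.symm (σ i)) = σ i := τ.apply_symm_apply _
    have h1 := hV (σ i)
    rw [σ.symm_apply_apply] at h1
    have h2 : τ.symm (σ i) < i := by
      by_contra hc
      rcases (not_lt.1 hc).eq_or_lt with he | hl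
      · rw [← he] at hj
        exact hlt.ne' hj
      · have := apply_lt_apply_of_avoids_p321 hτ (by rw [hj, ← h1, hI]) hl
        omega
    rw [← ih _ h2] at hj
    exact h2.ne (σ.injective hj)
  ext i
  induction i using WellFoundedLT.induction with
  | ind i ih =>
    have ih' : ∀ j < i, σ j = τ j := fun j hj => Fin.ext (ih j hj)
    have h1 := key σ τ hτ hI hV i ih'
    have h2 := key τ σ hσ (fun i => (hI i).symm) (fun i => (hV i).symm) i
      fun j hj => (ih' j hj).symm
    omega

theorem pathWeight_excWord {R : Type*} [CommSemiring R] (x y r : R) (hσ : Avoids σ p321) :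
    pathWeight x y r 0 (excWord σ) = statMonomial x y r σ := by
  have hend : cutHeight σ n = 0 := by
    simp [cutHeight]
  have h : ∀ k : Fin n, letterWeight x y r (pathHeight 0 (excWord σ) k) (excWord σ k) =
      x ^ (if (k : ℕ) < σ k then 1 else 0) * y ^ (if σ k = k then 1 else 0) *
        r ^ (2 * cutHeight σ (k + 1)) := by
    intro k
    have hs := pathHeight_succ 0 (excWord σ) k
    rw [letterWeight, ← hs, pathHeight_excWord, pathHeight_excWord, Int.toNat_natCast, if_neg]
    · congr 3
      · simp [excWord]
      · refine if_congr ?_ rfl rfl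
        simp only [excWord, decide_eq_true_eq, Int.natCast_eq_zero]
        have hup (h : 0 < cutHeight σ k) : ∃ j, k ≤ j ∧ σ j < k := by
          rw [cutHeight_eq_card_down, card_pos] at h
          obtain ⟨j, hj⟩ := h
          exact ⟨j, by simpa using hj⟩
        constructor
        · rintro ⟨h1, -, h3⟩
          rw [cutHeight_eq_card_down, card_eq_zero, filter_eq_empty_iff] at h3
          have := h3 (mem_univ k)
          omega
        · intro hk
          have hk' : σ.symm k = k := by rw [symm_apply_eq, hk]
          refine ⟨by omega, by omega, ?_⟩
          by_contra hc
          obtain ⟨j, hj1, hj2⟩ := hup (Nat.pos_of_ne_zero hc)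
          have := apply_lt_apply_of_avoids_p321 hσ (i := k) (j := j)
            ⟨fun _ => by omega, fun _ => by omega⟩ (lt_of_le_of_ne hj1 (by rintro rfl; omega))
          omega
    · simp only [excWord, decide_eq_true_eq]
      rintro ⟨h1, h2⟩
      have : 0 < cutHeight σ k := card_pos.2 ⟨σ.symm k, by simpa using h1⟩
      omega
  rw [pathWeight, prod_congr rfl fun k _ => h k, pathHeight_excWord, hend]
  simp only [prod_mul_distrib, prod_pow_eq_pow_sum, ← mul_sum, sum_cutHeight hσ, statMonomial, exc,
    fp, card_filter]
  simp

theorem exists_perm_of_card_eq {p q : Fin n → Prop} [DecidablePred p] [DecidablePred q]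
    (h : #{i | p i} = #{i | q i}) :
    ∃ σ : Perm (Fin n), (∀ i, q (σ i) ↔ p i) ∧ ∀ i j, (p i ↔ p j) → (σ i < σ j ↔ i < j) := by
  have h' : Fintype.card {i // ¬ p i} = Fintype.card {i // ¬ q i} := by
    rw [Fintype.card_subtype_compl, Fintype.card_subtype_compl, Fintype.card_subtype,
      Fintype.card_subtype, h]
  let e : {i // p i} ≃o {i // q i} := (Fintype.orderIsoFinOfCardEq _ rfl).symm.trans
    (Fintype.orderIsoFinOfCardEq _ (by rw [Fintype.card_subtype, Fintype.card_subtype, h]))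
  let e' : {i // ¬ p i} ≃o {i // ¬ q i} := (Fintype.orderIsoFinOfCardEq _ rfl).symm.trans
    (Fintype.orderIsoFinOfCardEq _ h'.symm)
  have hp : ∀ (i) (hi : p i), subtypeCongr e.toEquiv e'.toEquiv i = e ⟨i, hi⟩ := fun i hi => by
    simp [subtypeCongr, hi]
  have hn : ∀ (i) (hi : ¬ p i), subtypeCongr e.toEquiv e'.toEquiv i = e' ⟨i, hi⟩ := fun i hi => by
    simp [subtypeCongr, hi]
  refine ⟨subtypeCongr e.toEquiv e'.toEquiv, fun i => ?_, fun i j hij => ?_⟩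
  · by_cases hi : p i
    · rw [hp i hi]
      exact iff_of_true (e ⟨i, hi⟩).2 hi
    · rw [hn i hi]
      exact iff_of_false (e' ⟨i, hi⟩).2 hi
  · by_cases hi : p i
    · rw [hp i hi, hp j (hij.1 hi), Subtype.coe_lt_coe, e.lt_iff_lt, Subtype.mk_lt_mk]
    · rw [hn i hi, hn j (mt hij.2 hi), Subtype.coe_lt_coe, e'.lt_iff_lt, Subtype.mk_lt_mk]

theorem pathHeight_zero_eq (f : Fin n → Bool × Bool) (k : ℕ) :
    pathHeight 0 f k = #{i : Fin n | i.val < k ∧ (f i).1} - #{i : Fin n | i.val < k ∧ (f i).2} := by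
  simp only [pathHeight, stepHeight, sum_sub_distrib, ← sum_filter, filter_filter, sum_const,
    nsmul_eq_mul, mul_one, zero_add]

theorem exists_excWord_eq {f : Fin n → Bool × Bool} (hf : ∀ k, (f k).2 → 0 < pathHeight 0 f k)
    (hn : pathHeight 0 f n = 0) : ∃ σ : Perm (Fin n), Avoids σ p321 ∧ excWord σ = f := by
  have hcard : #{i | (f i).1} = #{i | (f i).2} := by
    rw [pathHeight_zero_eq] at hn
    simp only [Fin.is_lt, true_and] at hn
    omega
  obtain ⟨σ, hσ, hmono⟩ := exists_perm_of_card_eq hcard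
  have hI : ∀ i, (f i).1 → i < σ i := by
    intro i hi
    have h1 : #{j : Fin n | j.val < i.val ∧ (f j).1} = #{j : Fin n | j.val < (σ i).val ∧ (f j).2} := by
      refine card_equiv σ fun j => ?_
      simp only [mem_filter, mem_univ, true_and, hσ, Fin.val_fin_lt]
      exact and_congr_left fun hj => (hmono j i (by simp [hi, hj])).symm
    have h2 := hf (σ i) ((hσ i).2 hi)
    rw [pathHeight_zero_eq] at h2
    by_contra hc
    have h3 : #{j : Fin n | j.val < (σ i).val ∧ (f j).1} ≤ #{j : Fin n | j.val < i.val ∧ (f j).1} :=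
      card_le_card fun j => by
        simp only [mem_filter, mem_univ, true_and]
        exact fun h => ⟨by omega, h.2⟩
    omega
  have hI' : ∀ i, ¬ (f i).1 → σ i ≤ i := by
    intro i hi
    by_contra! hc
    have h1 : #{j : Fin n | j.val < i.val ∧ ¬ (f j).1} = #{j : Fin n | j.val < (σ i).val ∧ ¬ (f j).2} := by
      refine card_equiv σ fun j => ?_
      simp only [mem_filter, mem_univ, true_and, hσ, Fin.val_fin_lt]
      exact and_congr_left fun hj => (hmono j i (by simp [hi, hj])).symm
    have h2 := pathHeight_nonneg hf (σ i).is_lt.le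
    rw [pathHeight_zero_eq] at h2
    have h3 : #{j : Fin n | j.val < i.val ∧ ¬ (f j).1} < #{j : Fin n | j.val < (σ i).val ∧ ¬ (f j).1} :=
      card_lt_card <| (ssubset_iff_of_subset fun j => by
        simp only [mem_filter, mem_univ, true_and]
        exact fun h => ⟨by omega, h.2⟩).2 ⟨i, by simp [hc, hi], by simp⟩
    have h4 := card_filter_add_card_filter_not (s := {j : Fin n | j.val < σ i}) fun j => (f j).1
    have h5 := card_filter_add_card_filter_not (s := {j : Fin n | j.val < σ i}) fun j => (f j).2
    simp only [filter_filter] at h4 h5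
    omega
  refine ⟨σ, ?_, ?_⟩
  · rw [avoids_p321_iff]
    rintro i j k hij hjk ⟨h1, h2⟩
    have h : ((f i).1 ↔ (f j).1) ∨ ((f j).1 ↔ (f k).1) ∨ ((f i).1 ↔ (f k).1) := by tauto
    rcases h with h | h | h
    · exact h2.not_gt ((hmono _ _ h).2 hij)
    · exact h1.not_gt ((hmono _ _ h).2 hjk)
    · exact (h1.trans h2).not_gt ((hmono _ _ h).2 (hij.trans hjk))
  · funext k
    have hk := hσ (σ.symm k)
    rw [σ.apply_symm_apply] at hk
    have h1 : k < σ k ↔ (f k).1 := ⟨fun h => by_contra fun hc => (hI' k hc).not_gt h, hI k⟩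
    have h2 : σ.symm k < k ↔ (f k).2 := by
      rw [hk]
      have h3 := hI (σ.symm k)
      have h4 := hI' (σ.symm k)
      rw [σ.apply_symm_apply] at h3 h4
      exact ⟨fun h => by_contra fun hc => (h4 hc).not_gt h, h3⟩
    simp [excWord, h1, h2]

open Classical in
theorem sum_statMonomial_avoids_p321 {R : Type*} [CommSemiring R] (x y r : R) (n : ℕ) :
    ∑ σ : Perm (Fin n) with Avoids σ p321, statMonomial x y r σ = motzkinSum x y r n 0 := by
  rw [← sum_pathWeight, Nat.cast_zero]
  refine sum_of_injOn excWord (fun σ hσ τ hτ h => excWord_injOn (by simpa using hσ)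
    (by simpa using hτ) h) (fun _ _ => mem_coe.2 (mem_univ _)) (fun f _ hf => ?_) fun σ hσ =>
    (pathWeight_excWord x y r (by simpa using hσ)).symm
  by_contra h
  rw [pathWeight, ← ne_eq] at h
  refine hf ?_
  have h1 : pathHeight 0 f n = 0 := by
    by_contra hc
    rw [if_neg hc, mul_zero] at h
    exact h rfl
  have h2 : ∀ k, (f k).2 → 0 < pathHeight 0 f k := by
    intro k hk
    by_contra! hc
    rw [prod_eq_zero (mem_univ k) (by rw [letterWeight, if_pos ⟨hk, hc⟩]), zero_mul] at h
    exact h rfl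
  obtain ⟨σ, hσ, rfl⟩ := exists_excWord_eq h2 h1
  exact ⟨σ, by simpa using hσ, rfl⟩

end cut

theorem map_statMonomial {R S : Type*} [CommSemiring R] [CommSemiring S] (φ : R →+* S) (x y r : R)
    {n : ℕ} (σ : Perm (Fin n)) : φ (statMonomial x y r σ) = statMonomial (φ x) (φ y) (φ r) σ := by
  simp [statMonomial]

/-- The exponent vector of `statMonomial`. -/
noncomputable def statExponent {n : ℕ} (σ : Perm (Fin n)) : Fin 3 →₀ ℕ :=
  .single 0 (exc σ) + .single 1 (fp σ) + .single 2 (2 * (crs σ + exc σ))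

theorem stats_eq_of_statExponent_eq {n : ℕ} {σ τ : Perm (Fin n)}
    (h : statExponent σ = statExponent τ) : fp σ = fp τ ∧ exc σ = exc τ ∧ crs σ = crs τ := by
  have h0 := DFunLike.congr_fun h 0
  have h1 := DFunLike.congr_fun h 1
  have h2 := DFunLike.congr_fun h 2
  simp [statExponent] at h0 h1 h2
  omega

theorem statMonomial_X {n : ℕ} (σ : Perm (Fin n)) :
    statMonomial (.X 0) (.X 1) (.X 2) σ = MvPolynomial.monomial (statExponent σ) (1 : ℤ) := by
  simp only [statMonomial, statExponent, MvPolynomial.X_pow_eq_monomial, MvPolynomial.monomial_mul,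
    mul_one]

open Classical in
theorem sum_statMonomial_X (n : ℕ) :
    ∑ σ : Perm (Fin n) with Avoids σ p321,
        statMonomial (.X 0) (.X 1) (.X 2 : MvPolynomial (Fin 3) ℤ) σ =
      ∑ σ : Perm (Fin n) with Avoids σ p132, statMonomial (.X 0) (.X 1) (.X 2) σ := by
  let φ := algebraMap (MvPolynomial (Fin 3) ℤ) (FractionRing (MvPolynomial (Fin 3) ℤ))
  have hφ : Function.Injective φ := IsFractionRing.injective _ _
  have hr : φ (.X 2) ≠ 0 := (map_ne_zero_iff φ hφ).2 (MvPolynomial.X_ne_zero 2)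
  apply hφ
  simp only [map_sum, map_statMonomial]
  rw [sum_statMonomial_avoids_p321, sum_statMonomial_avoids_p132 _ _ hr]

open Classical in
theorem card_statExponent_fiber (n : ℕ) (d : Fin 3 →₀ ℕ) :
    #{σ : Perm (Fin n) | Avoids σ p321 ∧ statExponent σ = d} =
      #{σ : Perm (Fin n) | Avoids σ p132 ∧ statExponent σ = d} := by
  have h := congrArg (MvPolynomial.coeff d) (sum_statMonomial_X n)
  simp only [statMonomial_X, MvPolynomial.coeff_sum, MvPolynomial.coeff_monomial, ← sum_filter,
    filter_filter, sum_const, nsmul_eq_mul, mul_one] at h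
  exact_mod_cast h

/-- For every `n` there is a bijection `Θ` from `S_n(321)` to `S_n(132)` preserving
the number of fixed points, excedances and crossings. -/
theorem exists_fp_exc_crs_preserving_bijection (n : ℕ) :
    ∃ Θ : {σ : Equiv.Perm (Fin n) // Avoids σ p321} ≃ {σ : Equiv.Perm (Fin n) // Avoids σ p132},
      ∀ σ : {σ : Equiv.Perm (Fin n) // Avoids σ p321},
        fp ((Θ σ) : Equiv.Perm (Fin n)) = fp (σ : Equiv.Perm (Fin n)) ∧
        exc ((Θ σ) : Equiv.Perm (Fin n)) = exc (σ : Equiv.Perm (Fin n)) ∧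
        crs ((Θ σ) : Equiv.Perm (Fin n)) = crs (σ : Equiv.Perm (Fin n)) := by
  classical
  have e (d : Fin 3 →₀ ℕ) :
      {σ : {σ : Perm (Fin n) // Avoids σ p321} // statExponent σ.1 = d} ≃
        {σ : {σ : Perm (Fin n) // Avoids σ p132} // statExponent σ.1 = d} :=
    Fintype.equivOfCardEq <| by
      rw [Fintype.card_congr (subtypeSubtypeEquivSubtypeInter (Avoids · p321) (statExponent · = d)),
        Fintype.card_congr (subtypeSubtypeEquivSubtypeInter (Avoids · p132) (statExponent · = d)),
        Fintype.card_subtype, Fintype.card_subtype, card_statExponent_fiber]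
  refine ⟨ofFiberEquiv e, fun σ => ?_⟩
  exact stats_eq_of_statExponent_eq (ofFiberEquiv_map e σ)
end
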